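/- Let g₁, g₂ ∈ ℝ² and r₁, r₂ > 0 be such that the circles {x : dist(x,g₁) = r₁} and {x : dist(x,g₂) = r₂} intersect in exactly two distinct points m₁ ≠ m₂. Let p ∈ B̄(g₁,r₁) \ B̄(g₂,r₂), q ∈ B̄(g₂,r₂) \ B̄(g₁,r₁), and let u : [0,1] → ℝ² be a continuous path with u(0) = p, u(1) = q, and u(t) ∈ B̄(g₁,r₁) ∪ B̄(g₂,r₂) for all t. Then there exists t ∈ [0,1] with u(t) ∈ [m₁, m₂]. -/

import Mathlib

/-!
The difference of the powers of a point with respect to the two spheres changes sign along the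
path, so it vanishes at some point `x`; as `x` is covered by one of the balls, its common power is
nonpositive. Both powers still agree on the line through `x` in any direction orthogonal to the line
of centres, and this line leaves the first ball on either side of `x`. The two exit points have
power zero with respect to both spheres, so `x` lies between two common points of the spheres.
-/

open Metric EuclideanGeometry
open scoped RealInnerProductSpace

section NormedSpace

variable {V P : Type*} [NormedAddCommGroup V] [NormedSpace ℝ V] [MetricSpace P]
  [NormedAddTorsor V P]

theorem exists_nonneg_smul_vadd_mem_sphere {x c : P} {r : ℝ} (hx : x ∈ closedBall c r) {v : V}
    (hv : v ≠ 0) : ∃ t : ℝ, 0 ≤ t ∧ t • v +ᵥ x ∈ sphere c r := by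
  have hv_pos : 0 < ‖v‖ := norm_pos_iff.2 hv
  have hr : 0 ≤ r := nonneg_of_mem_closedBall hx
  set T : ℝ := (r + dist x c) / ‖v‖
  have hT : 0 ≤ T := by positivity
  have h_start : dist ((0 : ℝ) • v +ᵥ x) c ≤ r := by simpa using hx
  have h_end : r ≤ dist (T • v +ᵥ x) c := by
    have h_step : dist (T • v +ᵥ x) x = r + dist x c := by
      rw [dist_vadd_left, norm_smul, Real.norm_of_nonneg hT, div_mul_cancel₀ _ hv_pos.ne']
    linarith [dist_triangle_right (T • v +ᵥ x) x c]
  have h_cont : ContinuousOn (fun t : ℝ ↦ dist (t • v +ᵥ x) c) (Set.Icc 0 T) := by fun_prop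
  obtain ⟨t, ht, h_eq⟩ := intermediate_value_Icc hT h_cont ⟨h_start, h_end⟩
  exact ⟨t, ht.1, h_eq⟩

end NormedSpace

section Power

theorem continuous_power {P : Type*} [MetricSpace P] (s : Sphere P) : Continuous s.power := by
  unfold Sphere.power
  fun_prop

variable {V P : Type*} [NormedAddCommGroup V] [InnerProductSpace ℝ V] [MetricSpace P]
  [NormedAddTorsor V P]

theorem power_vadd (s : Sphere P) (v : V) (x : P) :
    s.power (v +ᵥ x) = s.power x + 2 * ⟪v, x -ᵥ s.center⟫ + ‖v‖ ^ 2 := by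
  simp only [Sphere.power, dist_eq_norm_vsub V, vadd_vsub_assoc, norm_add_sq_real]
  ring

theorem power_vadd_eq_of_inner_eq_zero {s₁ s₂ : Sphere P} {x : P}
    (hx : s₁.power x = s₂.power x) {v : V} (hv : ⟪v, s₂.center -ᵥ s₁.center⟫ = 0) :
    s₁.power (v +ᵥ x) = s₂.power (v +ᵥ x) := by
  have h_inner : ⟪v, x -ᵥ s₁.center⟫ = ⟪v, x -ᵥ s₂.center⟫ := by
    rw [← vsub_add_vsub_cancel x s₂.center s₁.center, inner_add_right, hv, add_zero]
  rw [power_vadd, power_vadd, hx, h_inner]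

end Power

theorem exists_ne_zero_inner_eq_zero {𝕜 E : Type*} [RCLike 𝕜] [NormedAddCommGroup E]
    [InnerProductSpace 𝕜 E] (hE : 1 < Module.rank 𝕜 E) (w : E) :
    ∃ v : E, v ≠ 0 ∧ inner 𝕜 v w = 0 := by
  have h_ne_bot : (𝕜 ∙ w)ᗮ ≠ ⊥ := by
    intro h_bot
    have h_top : 𝕜 ∙ w = ⊤ := Submodule.orthogonal_eq_bot_iff.1 h_bot
    have h_rank : Module.rank 𝕜 (𝕜 ∙ w) ≤ 1 := by simpa using rank_span_le (R := 𝕜) {w}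
    rw [h_top, rank_top] at h_rank
    exact hE.not_ge h_rank
  obtain ⟨v, hv_mem, hv⟩ := Submodule.exists_mem_ne_zero_of_ne_bot h_ne_bot
  exact ⟨v, hv, Submodule.mem_orthogonal_singleton_iff_inner_left.1 hv_mem⟩

section InnerProductSpace

variable {E : Type*} [NormedAddCommGroup E] [InnerProductSpace ℝ E]

theorem mem_convexHull_inter_of_power_eq (hE : 1 < Module.rank ℝ E) {s₁ s₂ : Sphere E}
    (hr₂ : 0 ≤ s₂.radius) {x : E} (hx : x ∈ closedBall s₁.center s₁.radius)
    (h_power : s₁.power x = s₂.power x) : x ∈ convexHull ℝ (s₁ ∩ s₂ : Set E) := by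
  have hr₁ : 0 ≤ s₁.radius := nonneg_of_mem_closedBall hx
  obtain ⟨v, hv, h_orth⟩ := exists_ne_zero_inner_eq_zero hE (s₂.center - s₁.center)
  have mem_inter {w : E} (hw : ⟪w, s₂.center - s₁.center⟫ = 0) (h₁ : w + x ∈ s₁) :
      w + x ∈ (s₁ ∩ s₂ : Set E) := by
    refine ⟨h₁, (Sphere.power_eq_zero_iff_mem_sphere hr₂).1 ?_⟩
    exact (power_vadd_eq_of_inner_eq_zero h_power hw).symm.trans
      ((Sphere.power_eq_zero_iff_mem_sphere hr₁).2 h₁)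
  obtain ⟨a, ha, ha_mem⟩ := exists_nonneg_smul_vadd_mem_sphere hx hv
  obtain ⟨b, hb, hb_mem⟩ := exists_nonneg_smul_vadd_mem_sphere hx (neg_ne_zero.2 hv)
  have h_between : x ∈ segment ℝ (a • v + x) (b • -v + x) := by
    rw [mem_segment_iff_sameRay, add_sub_cancel_right, sub_add_cancel_right, ← smul_neg]
    exact (SameRay.refl (-v)).nonneg_smul_left ha |>.nonneg_smul_right hb
  refine segment_subset_convexHull (mem_inter ?_ ha_mem) (mem_inter ?_ hb_mem) h_between
  · rw [real_inner_smul_left, h_orth, mul_zero]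
  · rw [real_inner_smul_left, inner_neg_left, h_orth, neg_zero, mul_zero]

theorem path_crossing_disks_meets_chord_general (hE : 1 < Module.rank ℝ E) {c₁ c₂ : E} {r₁ r₂ : ℝ}
    {S : Set E} (hS : IsPreconnected S) (hS_sub : S ⊆ closedBall c₁ r₁ ∪ closedBall c₂ r₂)
    (h₁ : (S ∩ (closedBall c₁ r₁ \ ball c₂ r₂)).Nonempty)
    (h₂ : (S ∩ (closedBall c₂ r₂ \ ball c₁ r₁)).Nonempty) :
    (S ∩ convexHull ℝ (sphere c₁ r₁ ∩ sphere c₂ r₂)).Nonempty := by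
  obtain ⟨p, hpS, hp₁, hp₂⟩ := h₁
  obtain ⟨q, hqS, hq₂, hq₁⟩ := h₂
  have hr₁ : 0 ≤ r₁ := nonneg_of_mem_closedBall hp₁
  have hr₂ : 0 ≤ r₂ := nonneg_of_mem_closedBall hq₂
  let s₁ : Sphere E := ⟨c₁, r₁⟩
  let s₂ : Sphere E := ⟨c₂, r₂⟩
  have hp : s₁.power p ≤ s₂.power p :=
    ((Sphere.power_nonpos_iff_dist_center_le_radius hr₁).2 hp₁).trans
      ((Sphere.power_nonneg_iff_radius_le_dist_center hr₂).2 (not_lt.1 hp₂))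
  have hq : s₂.power q ≤ s₁.power q :=
    ((Sphere.power_nonpos_iff_dist_center_le_radius hr₂).2 hq₂).trans
      ((Sphere.power_nonneg_iff_radius_le_dist_center hr₁).2 (not_lt.1 hq₁))
  obtain ⟨x, hxS, hx⟩ := hS.intermediate_value₂ hpS hqS (continuous_power s₁).continuousOn
    (continuous_power s₂).continuousOn hp hq
  have hx₁ : x ∈ closedBall c₁ r₁ := by
    refine (hS_sub hxS).elim id fun hx₂ ↦ ?_
    refine (Sphere.power_nonpos_iff_dist_center_le_radius (s := s₁) hr₁).1 (hx.trans_le ?_)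
    exact (Sphere.power_nonpos_iff_dist_center_le_radius hr₂).2 hx₂
  exact ⟨x, hxS, mem_convexHull_inter_of_power_eq hE (s₁ := s₁) hr₂ hx₁ hx⟩

end InnerProductSpace

/-- If the boundary circles of two disks intersect in exactly the two distinct
points `m₁ ≠ m₂`, then any continuous path from a point covered only by the first disk to a
point covered only by the second disk, staying in the union of the two disks, must cross the
chord `[m₁, m₂]`. -/
theorem path_crossing_disks_meets_chord
    (g₁ g₂ m₁ m₂ p q : EuclideanSpace ℝ (Fin 2)) (r₁ r₂ : ℝ)
    (hr₁ : 0 < r₁) (hr₂ : 0 < r₂) (hm : m₁ ≠ m₂)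
    (hcirc : Metric.sphere g₁ r₁ ∩ Metric.sphere g₂ r₂ = {m₁, m₂})
    (hp : p ∈ Metric.closedBall g₁ r₁ \ Metric.closedBall g₂ r₂)
    (hq : q ∈ Metric.closedBall g₂ r₂ \ Metric.closedBall g₁ r₁)
    (u : ℝ → EuclideanSpace ℝ (Fin 2)) (hu : ContinuousOn u (Set.Icc 0 1))
    (hu0 : u 0 = p) (hu1 : u 1 = q)
    (humem : ∀ t ∈ Set.Icc (0 : ℝ) 1,
      u t ∈ Metric.closedBall g₁ r₁ ∪ Metric.closedBall g₂ r₂) :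
    ∃ t ∈ Set.Icc (0 : ℝ) 1, u t ∈ segment ℝ m₁ m₂ := by
  have h_rank : 1 < Module.rank ℝ (EuclideanSpace ℝ (Fin 2)) := by
    simp [← Module.finrank_eq_rank]
  have hpS : p ∈ u '' Set.Icc 0 1 := ⟨0, Set.left_mem_Icc.2 zero_le_one, hu0⟩
  have hqS : q ∈ u '' Set.Icc 0 1 := ⟨1, Set.right_mem_Icc.2 zero_le_one, hu1⟩
  obtain ⟨_, ⟨t, ht, rfl⟩, h_hull⟩ := path_crossing_disks_meets_chord_general h_rank
    (isPreconnected_Icc.image u hu) (Set.image_subset_iff.2 humem)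
    ⟨p, hpS, Set.sdiff_subset_sdiff_right ball_subset_closedBall hp⟩
    ⟨q, hqS, Set.sdiff_subset_sdiff_right ball_subset_closedBall hq⟩
  exact ⟨t, ht, by rwa [hcirc, convexHull_pair] at h_hull⟩
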